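/- arXiv:0708.0048 — 3 statements merged into one kernel-verified Lean document; each statement's English description precedes it below -/
import Mathlib

section
/- Let α ∈ (0,1) be irrational. A positive integer r satisfies r = r_k for some k ≥ 1 if and only if either r = r_{k_j} for some j > 0, or r = r_{k_j} + c_1 q_1 + 1 for some j ≥ 0 and some integer 1 ≤ c_1 ≤ a_2. -/
open Filter Finset

noncomputable section

/-- The Gauss map `G(x) = {1/x}` (with `G(0) = 0`, since `0⁻¹ = 0` in Lean). -/
def gaussMap (x : ℝ) : ℝ := Int.fract x⁻¹

/-- `α_m = G^m(α)`. -/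
def gaussIter (α : ℝ) (m : ℕ) : ℝ := gaussMap^[m] α

/-- The `h`-th partial quotient `a_h` of `α` (meaningful for `h ≥ 1`):
`a_h = ⌊(G^{h-1} α)⁻¹⌋`. -/
def pq (α : ℝ) (h : ℕ) : ℕ := ⌊(gaussIter α (h - 1))⁻¹⌋₊

/-- Denominators `q_n` of the convergents of `α`:
`q_0 = 1`, `q_1 = a_1`, `q_{n+2} = a_{n+2} q_{n+1} + q_n`. -/
def qden (α : ℝ) : ℕ → ℕ
  | 0 => 1
  | 1 => pq α 1
  | (n + 2) => pq α (n + 2) * qden α (n + 1) + qden α n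

/-- Numerators `p_n` of the convergents of `α`:
`p_0 = 0`, `p_1 = 1`, `p_{n+2} = a_{n+2} p_{n+1} + p_n`. -/
def pnum (α : ℝ) : ℕ → ℕ
  | 0 => 0
  | 1 => 1
  | (n + 2) => pq α (n + 2) * pnum α (n + 1) + pnum α n

/-- `f_n = (-1)^n (q_n α - p_n)`. -/
def fseq (α : ℝ) (n : ℕ) : ℝ := (-1) ^ n * ((qden α n : ℝ) * α - (pnum α n : ℝ))

/-- `r_k = min {r ≥ 0 : ⌊r α⌋ = k}`. -/
def rmin (α : ℝ) (k : ℕ) : ℕ := sInf {r : ℕ | ⌊(r : ℝ) * α⌋ = (k : ℤ)}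

/-- `t_k = #{r ≥ 0 : ⌊r α⌋ = k}`. -/
def tcount (α : ℝ) (k : ℕ) : ℕ := Set.ncard {r : ℕ | ⌊(r : ℝ) * α⌋ = (k : ℤ)}

/-- `(k_j)_{j ≥ 0}`: the increasing enumeration of `{k : t_k = a_1 + 1}`. -/
def kseq (α : ℝ) (j : ℕ) : ℕ := Nat.nth (fun k => tcount α k = pq α 1 + 1) j

/-- The gaps `g_j = r_{k_j} - r_{k_{j-1}}` (for `j ≥ 1`). -/
def gseq (γ : ℝ) (j : ℕ) : ℕ := rmin γ (kseq γ j) - rmin γ (kseq γ (j - 1))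

/-- `(j_h)_{h ≥ 0}`: the increasing enumeration of those `j ≥ 1` with
`g_j = q_2 + q_1`. -/
def jbig (γ : ℝ) (h : ℕ) : ℕ :=
  Nat.nth (fun j => 1 ≤ j ∧ gseq γ j = qden γ 2 + qden γ 1) h

/-- `ᾱ_1 = G(α)/(1 - G(α))`. -/
def abar (α : ℝ) : ℝ := gaussIter α 1 / (1 - gaussIter α 1)

/-- The Ostrowski representation `r = ∑_{h=0}^N c_h q_h` with `0 ≤ c_h ≤ a_{h+1}`,
`c_{h-1} = 0` whenever `c_h = a_{h+1}`, and `c_N > 0`; `N = ord r`. -/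
def IsOstrowski (α : ℝ) (r N : ℕ) (c : ℕ → ℕ) : Prop :=
  r = ∑ h ∈ Finset.range (N + 1), c h * qden α h ∧
  (∀ h, c h ≤ pq α (h + 1)) ∧
  (∀ h, c (h + 1) = pq α (h + 2) → c h = 0) ∧
  0 < c N ∧ ∀ h, N < h → c h = 0

/-- The order `ord r` of a positive integer `r`. -/
def ordOst (α : ℝ) (r : ℕ) : ℕ := sInf {N | ∃ c, IsOstrowski α r N c}

/-- `s(y) = 2 χ_{[0,1/2)}({y}) - 1`. -/
def sfun (y : ℝ) : ℝ := if Int.fract y < 1 / 2 then 1 else -1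

/-- `S_n(α, β) = ∑_{r=0}^n s({r α + β})`. -/
def Sgen (α β : ℝ) (n : ℕ) : ℝ := ∑ r ∈ Finset.range (n + 1), sfun ((r : ℝ) * α + β)

/-- `S_n(α) = S_n(α, 0)`. -/
def Ssum (α : ℝ) (n : ℕ) : ℝ := Sgen α 0 n

/-- `max_{0 ≤ n ≤ r} S_n(α)`. -/
def maxS (α : ℝ) (r : ℕ) : ℝ := sSup (Ssum α '' Set.Iic r)

/-- `min_{0 ≤ n ≤ r} S_n(α)`. -/
def minS (α : ℝ) (r : ℕ) : ℝ := sInf (Ssum α '' Set.Iic r)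

/-- `d_n(α, β) = ∑_{r=0}^{n-1} χ_{[0,β)}({r α}) - β n`. -/
def ddisc (α β : ℝ) (n : ℕ) : ℝ :=
  (∑ r ∈ Finset.range n, if Int.fract ((r : ℝ) * α) < β then (1 : ℝ) else 0) - β * n

/-- `j(r) = max {j + sgn R₁ - 1, 0}` from the decomposition `r = r_{k_j} + R₁ q₁ + R₀`. -/
def jfun (j R1 : ℕ) : ℕ := if R1 = 0 then j - 1 else j

/-- `i(r) = k_j - j + max {R₁ - 1, 0}` from the decomposition `r = r_{k_j} + R₁ q₁ + R₀`. -/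
def ifun (α : ℝ) (j R1 : ℕ) : ℕ := kseq α j - j + (R1 - 1)

/-- `S̃(r)` from the decomposition `r = r_{k_j} + R₁ q₁ + R₀`. -/
def Stil (α : ℝ) (r R1 R0 : ℕ) : ℝ :=
  if R0 = 0 then (if R1 = 0 then sfun ((r : ℝ) * α) else 0)
  else if R1 = 0 then ∑ i ∈ Finset.Icc (r - R0) r, sfun ((i : ℝ) * α)
  else ∑ i ∈ Finset.Icc (r - R0 + 1) r, sfun ((i : ℝ) * α)

/-- `sup_{β ∈ (0,1)} |d_n(α, β)| = n D_n^*(α)`. -/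
def nDsup (α : ℝ) (n : ℕ) : ℝ := sSup ((fun β => |ddisc α β n|) '' Set.Ioo (0 : ℝ) 1)

/-- The discrepancy `D_n^*(α) = sup_{β ∈ (0,1)} |d_n(α, β)| / n`. -/
def Dstar (α : ℝ) (n : ℕ) : ℝ :=
  sSup ((fun β => |ddisc α β n| / (n : ℝ)) '' Set.Ioo (0 : ℝ) 1)

/-
Put `x = G(α)`. Since `α⁻¹ = a₁ + x`, one has `r_k = ⌈k / α⌉ = k a₁ + ⌈k x⌉`, and `k` is one of the
`k_j` exactly when `⌈k x⌉` jumps at `k`. For `0 < x ≤ 1` the maps `k ↦ ⌈k x⌉` and `j ↦ ⌊j / x⌋` form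
a Galois connection, so `k_j = ⌊j / x⌋` and `⌈k x⌉ = j + 1` precisely for `k_j < k ≤ k_{j+1}`. These
blocks partition the positive integers, and each of them has length `a₂ = ⌊x⁻¹⌋` or `a₂ + 1`.
-/

lemma nth_mem_range_of_strictMono {f : ℕ → ℕ} (hf : StrictMono f) (n : ℕ) :
    Nat.nth (· ∈ Set.range f) n = f n := by
  have hinf : ¬(Set.range f).Finite := Set.infinite_range_of_injective hf.injective
  rw [← Nat.nth_comp_of_strictMono hf (fun _ hk => hk) (fun h => absurd h hinf)]
  simp

section Floor

variable {K : Type*} [Field K] [LinearOrder K] [IsStrictOrderedRing K] [FloorSemiring K] {x : K}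

lemma ceil_natCast_mul_le_iff (hx : 0 < x) {k j : ℕ} :
    ⌈(k : K) * x⌉₊ ≤ j ↔ k ≤ ⌊(j : K) / x⌋₊ := by
  rw [Nat.ceil_le, Nat.le_floor_iff (by positivity), le_div_iff₀ hx]

lemma ceil_natCast_mul_eq_add_one_iff (hx : 0 < x) {k j : ℕ} :
    ⌈(k : K) * x⌉₊ = j + 1 ↔ ⌊(j : K) / x⌋₊ < k ∧ k ≤ ⌊((j + 1 : ℕ) : K) / x⌋₊ := by
  rw [← ceil_natCast_mul_le_iff hx, ← not_le, ← ceil_natCast_mul_le_iff hx]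
  omega

lemma floor_natCast_div_add_floor_inv_le (hx : 0 < x) (j : ℕ) :
    ⌊(j : K) / x⌋₊ + ⌊x⁻¹⌋₊ ≤ ⌊((j + 1 : ℕ) : K) / x⌋₊ := by
  rw [Nat.cast_succ, add_div, one_div]
  apply Nat.le_floor
  push_cast
  exact add_le_add (Nat.floor_le (by positivity)) (Nat.floor_le (by positivity))

lemma floor_natCast_succ_div_le (hx : 0 < x) (j : ℕ) :
    ⌊((j + 1 : ℕ) : K) / x⌋₊ ≤ ⌊(j : K) / x⌋₊ + ⌊x⁻¹⌋₊ + 1 := by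
  rw [Nat.cast_succ, add_div, one_div, ← Nat.lt_add_one_iff, Nat.floor_lt (by positivity)]
  push_cast
  linarith [Nat.lt_floor_add_one ((j : K) / x), Nat.lt_floor_add_one x⁻¹]

lemma strictMono_floor_natCast_div (hx : 0 < x) (hx1 : x ≤ 1) :
    StrictMono fun j : ℕ => ⌊(j : K) / x⌋₊ := by
  refine strictMono_nat_of_lt_succ fun j => ?_
  have hinv : 1 ≤ ⌊x⁻¹⌋₊ := (Nat.one_le_floor_iff _).2 ((one_le_inv₀ hx).2 hx1)
  have hstep := floor_natCast_div_add_floor_inv_le hx j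
  omega

lemma ceil_floor_natCast_div_mul (hx : 0 < x) (hx1 : x ≤ 1) (j : ℕ) :
    ⌈(⌊(j : K) / x⌋₊ : K) * x⌉₊ = j :=
  eq_of_forall_ge_iff fun _ =>
    (ceil_natCast_mul_le_iff hx).trans (strictMono_floor_natCast_div hx hx1).le_iff_le

lemma ceil_natCast_succ_mul_eq_add_one_iff (hx : 0 < x) (hx1 : x ≤ 1) {k : ℕ} :
    ⌈((k + 1 : ℕ) : K) * x⌉₊ = ⌈(k : K) * x⌉₊ + 1 ↔
      k ∈ Set.range fun j : ℕ => ⌊(j : K) / x⌋₊ := by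
  constructor
  · intro hjump
    have hle : ⌊(⌈(k : K) * x⌉₊ : K) / x⌋₊ < k + 1 :=
      ((ceil_natCast_mul_eq_add_one_iff hx).1 hjump).1
    have hge : k ≤ ⌊(⌈(k : K) * x⌉₊ : K) / x⌋₊ := (ceil_natCast_mul_le_iff hx).1 le_rfl
    exact ⟨⌈(k : K) * x⌉₊, by dsimp only; omega⟩
  · rintro ⟨j, rfl⟩
    rw [ceil_floor_natCast_div_mul hx hx1, ceil_natCast_mul_eq_add_one_iff hx]
    exact ⟨Nat.lt_add_one _, strictMono_floor_natCast_div hx hx1 j.lt_add_one⟩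

end Floor

lemma ceil_natCast_mul_eq_mul_floor_add {R : Type*} [Ring R] [LinearOrder R]
    [IsStrictOrderedRing R] [FloorRing R] {y : R} (hy : 0 ≤ y) (k : ℕ) :
    ⌈(k : R) * y⌉₊ = k * ⌊y⌋₊ + ⌈(k : R) * Int.fract y⌉₊ := by
  have hsplit : (k : R) * y = k * Int.fract y + ((k * ⌊y⌋₊ : ℕ) : R) := by
    rw [Nat.cast_mul, natCast_floor_eq_intCast_floor hy, ← mul_add, Int.fract_add_floor]
  rw [hsplit, Nat.ceil_add_natCast (mul_nonneg k.cast_nonneg (Int.fract_nonneg y)), add_comm]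

lemma setOf_floor_natCast_mul_eq {K : Type*} [Field K] [LinearOrder K] [IsStrictOrderedRing K]
    [FloorRing K] {a : K} (ha : 0 < a) (k : ℕ) :
    {r : ℕ | ⌊(r : K) * a⌋ = (k : ℤ)} =
      Set.Ico ⌈(k : K) * a⁻¹⌉₊ ⌈((k + 1 : ℕ) : K) * a⁻¹⌉₊ := by
  ext r
  simp only [Set.mem_ofPred_eq, Set.mem_Ico, Nat.ceil_le, Nat.lt_ceil, Int.floor_eq_iff,
    ← div_eq_mul_inv, div_le_iff₀ ha, lt_div_iff₀ ha]
  push_cast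
  rfl

section Blocks

variable {α : ℝ}

lemma ceil_natCast_mul_inv_eq (h0 : 0 < α) (k : ℕ) :
    ⌈(k : ℝ) * α⁻¹⌉₊ = k * qden α 1 + ⌈(k : ℝ) * gaussIter α 1⌉₊ :=
  ceil_natCast_mul_eq_mul_floor_add (inv_pos.2 h0).le k

lemma rmin_eq (h0 : 0 < α) (h1 : α < 1) (k : ℕ) :
    rmin α k = k * qden α 1 + ⌈(k : ℝ) * gaussIter α 1⌉₊ := by
  have hq : 1 ≤ qden α 1 := (Nat.one_le_floor_iff _).2 ((one_lt_inv₀ h0).2 h1).le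
  have hG : 0 ≤ gaussIter α 1 := Int.fract_nonneg _
  have hmono : ⌈(k : ℝ) * gaussIter α 1⌉₊ ≤ ⌈((k + 1 : ℕ) : ℝ) * gaussIter α 1⌉₊ := by
    gcongr
    exact k.le_succ
  rw [rmin, setOf_floor_natCast_mul_eq h0, ceil_natCast_mul_inv_eq h0, ceil_natCast_mul_inv_eq h0]
  exact csInf_Ico (by rw [Nat.add_one_mul]; omega)

lemma tcount_eq_pq_one_add_one_iff (h0 : 0 < α) (k : ℕ) :
    tcount α k = pq α 1 + 1 ↔
      ⌈((k + 1 : ℕ) : ℝ) * gaussIter α 1⌉₊ = ⌈(k : ℝ) * gaussIter α 1⌉₊ + 1 := by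
  have hq : qden α 1 = pq α 1 := rfl
  rw [tcount, setOf_floor_natCast_mul_eq h0, Set.ncard_Ico_nat, ceil_natCast_mul_inv_eq h0,
    ceil_natCast_mul_inv_eq h0, Nat.add_one_mul]
  omega

lemma gaussIter_one_le_one : gaussIter α 1 ≤ 1 := (Int.fract_lt_one _).le

lemma kseq_eq_floor (h0 : 0 < α) (hG : 0 < gaussIter α 1) (j : ℕ) :
    kseq α j = ⌊(j : ℝ) / gaussIter α 1⌋₊ := by
  simp only [kseq, tcount_eq_pq_one_add_one_iff h0,
    ceil_natCast_succ_mul_eq_add_one_iff hG gaussIter_one_le_one]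
  exact nth_mem_range_of_strictMono (strictMono_floor_natCast_div hG gaussIter_one_le_one) j

lemma strictMono_kseq (h0 : 0 < α) (hG : 0 < gaussIter α 1) : StrictMono (kseq α) := by
  simpa only [← kseq_eq_floor h0 hG] using strictMono_floor_natCast_div hG gaussIter_one_le_one

lemma kseq_add_pq_two_le (h0 : 0 < α) (hG : 0 < gaussIter α 1) (j : ℕ) :
    kseq α j + pq α 2 ≤ kseq α (j + 1) := by
  rw [kseq_eq_floor h0 hG, kseq_eq_floor h0 hG]
  exact floor_natCast_div_add_floor_inv_le hG j

lemma kseq_succ_le (h0 : 0 < α) (hG : 0 < gaussIter α 1) (j : ℕ) :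
    kseq α (j + 1) ≤ kseq α j + pq α 2 + 1 := by
  rw [kseq_eq_floor h0 hG, kseq_eq_floor h0 hG]
  exact floor_natCast_succ_div_le hG j

lemma rmin_kseq (h0 : 0 < α) (h1 : α < 1) (hG : 0 < gaussIter α 1) (j : ℕ) :
    rmin α (kseq α j) = kseq α j * qden α 1 + j := by
  rw [rmin_eq h0 h1, kseq_eq_floor h0 hG, ceil_floor_natCast_div_mul hG gaussIter_one_le_one]

lemma rmin_kseq_add (h0 : 0 < α) (h1 : α < 1) (hG : 0 < gaussIter α 1) {j c : ℕ} (hc : 1 ≤ c)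
    (hcj : kseq α j + c ≤ kseq α (j + 1)) :
    rmin α (kseq α j + c) = rmin α (kseq α j) + c * qden α 1 + 1 := by
  have hceil : ⌈((kseq α j + c : ℕ) : ℝ) * gaussIter α 1⌉₊ = j + 1 := by
    rw [ceil_natCast_mul_eq_add_one_iff hG, ← kseq_eq_floor h0 hG, ← kseq_eq_floor h0 hG]
    exact ⟨Nat.lt_add_of_pos_right hc, hcj⟩
  rw [rmin_kseq h0 h1 hG, rmin_eq h0 h1, hceil]
  ring

lemma exists_kseq_lt_le_kseq_succ (h0 : 0 < α) (hG : 0 < gaussIter α 1) {k : ℕ} (hk : 1 ≤ k) :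
    ∃ j, kseq α j < k ∧ k ≤ kseq α (j + 1) := by
  have hpos : 0 < ⌈(k : ℝ) * gaussIter α 1⌉₊ :=
    Nat.ceil_pos.2 (mul_pos (Nat.cast_pos.2 hk) hG)
  obtain ⟨j, hj⟩ := Nat.exists_eq_add_one.2 hpos
  exact ⟨j, by simpa only [kseq_eq_floor h0 hG] using (ceil_natCast_mul_eq_add_one_iff hG).1 hj⟩

end Blocks

/-- The condition `gaussIter α 1 ≠ 0` says that `α⁻¹` is not an integer, i.e. that the
continued fraction of `α` has a partial quotient `a_2`. -/
theorem rk_charac_general (α : ℝ) (h0 : 0 < α) (h1 : α < 1) (hne : gaussIter α 1 ≠ 0) (r : ℕ) :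
    (∃ k, 1 ≤ k ∧ r = rmin α k) ↔
      ((∃ j, 0 < j ∧ r = rmin α (kseq α j)) ∨
        ∃ j c1 : ℕ, 1 ≤ c1 ∧ c1 ≤ pq α 2 ∧
          r = rmin α (kseq α j) + c1 * qden α 1 + 1) := by
  have hG : 0 < gaussIter α 1 := (Int.fract_nonneg _).lt_of_ne' hne
  constructor
  · rintro ⟨k, hk, rfl⟩
    obtain ⟨j, hjk, hkj⟩ := exists_kseq_lt_le_kseq_succ h0 hG hk
    rcases hkj.eq_or_lt with rfl | hlt
    · exact .inl ⟨j + 1, j.succ_pos, rfl⟩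
    · obtain ⟨c, rfl⟩ := Nat.exists_eq_add_of_le hjk.le
      have hc : 1 ≤ c := by omega
      have hc2 : c ≤ pq α 2 := by have := kseq_succ_le h0 hG j; omega
      exact .inr ⟨j, c, hc, hc2, rmin_kseq_add h0 h1 hG hc hkj⟩
  · rintro (⟨j, hj, rfl⟩ | ⟨j, c, hc, hc2, rfl⟩)
    · exact ⟨kseq α j, hj.trans_le (strictMono_kseq h0 hG).le_apply, rfl⟩
    · have hcj : kseq α j + c ≤ kseq α (j + 1) := by have := kseq_add_pq_two_le h0 hG j; omega
      exact ⟨kseq α j + c, by omega, (rmin_kseq_add h0 h1 hG hc hcj).symm⟩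

/-- a positive integer `r` satisfies `r = r_k` for some `k ≥ 1` iff
either `r = r_{k_j}` for some `j > 0`, or `r = r_{k_j} + c_1 q_1 + 1` for some
`j ≥ 0` and `1 ≤ c_1 ≤ a_2`. -/
theorem rk_charac (α : ℝ) (hirr : Irrational α) (h0 : 0 < α) (h1 : α < 1)
    (r : ℕ) (hr : 0 < r) :
    (∃ k, 1 ≤ k ∧ r = rmin α k) ↔
      ((∃ j, 0 < j ∧ r = rmin α (kseq α j)) ∨
        ∃ j c1 : ℕ, 1 ≤ c1 ∧ c1 ≤ pq α 2 ∧
          r = rmin α (kseq α j) + c1 * qden α 1 + 1) :=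
  rk_charac_general α h0 h1 (Int.fract_ne_zero_iff.2 fun ⟨n, hn⟩ => hirr.inv.ne_int n hn.symm) r
end
end

section
/- Let α ∈ (0,1) be irrational with a_1 odd. Then for every r ≥ 0, S_r(α) = S_{i(r)}(−ᾱ_1) − 1 + S̃(r), where S_n(−ᾱ_1) := Σ_{r=0}^{n} s({−r ᾱ_1}); moreover S_n(−ᾱ_1) − 1 = −(S_n(ᾱ_1) − 1) for all n ≥ 0. -/
open Filter Finset

noncomputable section

/-!
Group the integers `r ≥ 0` by the level `k = ⌊r α⌋`. Writing `1/α = a₁ + β` with `β = G(α)`, level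
`k` starts at `r_k = k a₁ + c_k`, where `c_k = ⌈k β⌉` counts the levels of length `a₁ + 1` among
the first `k`, and `r_k α = k + δ_k α` with `δ_k = c_k - k β ∈ [0, 1)`. Along a level the signs
`s(r α)` are first `+1` and then `-1`, switching at `r = r_k + ⌈1/(2α) - δ_k⌉`. When
`a₁ = 2b + 1`, a level of length `2b + 2` is balanced, whereas one of length `2b + 1` contributes
`+1` or `-1` according to whether `(δ_k - β)/(1 - β)` is less than `1/2` or not. This number is
the fractional part of `-(k + 1 - c_k) ᾱ₁`, so the contribution is the term of index `k + 1 - c_k`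
in the sum for `-ᾱ₁`, and `k - c_k` is exactly the number of levels of length `a₁` among the first
`k`.
-/

section SignSums

lemma sfun_intCast_add (z : ℤ) {t : ℝ} (ht₀ : 0 ≤ t) (ht₁ : t < 1) :
    sfun (z + t) = if t < 1 / 2 then 1 else -1 := by
  rw [sfun, Int.fract_intCast_add, Int.fract_eq_self.mpr ⟨ht₀, ht₁⟩]

lemma irrational_fract {x : ℝ} (hx : Irrational x) : Irrational (Int.fract x) :=
  hx.sub_intCast ⌊x⌋

lemma sfun_neg_of_irrational {x : ℝ} (hx : Irrational x) : sfun (-x) = -sfun x := by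
  have hfract := irrational_fract hx
  have hhalf : Int.fract x ≠ 1 / 2 := by simpa using hfract.ne_rat (1 / 2)
  rw [sfun, sfun, Int.fract_neg hfract.ne_zero]
  rcases hhalf.lt_or_gt with h | h
  · rw [if_neg (by linarith), if_pos h]
  · rw [if_pos (by linarith), if_neg (by linarith), neg_neg]

lemma Ssum_eq_sum (γ : ℝ) (n : ℕ) : Ssum γ n = ∑ i ∈ range (n + 1), sfun (i * γ) := by
  simp only [Ssum, Sgen, add_zero]

lemma Ssum_zero (γ : ℝ) : Ssum γ 0 = 1 := by
  simp [Ssum_eq_sum, sfun]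

lemma Ssum_succ (γ : ℝ) (n : ℕ) : Ssum γ (n + 1) = Ssum γ n + sfun ((n + 1 : ℕ) * γ) := by
  rw [Ssum_eq_sum, sum_range_succ, ← Ssum_eq_sum]

lemma Ssum_neg_sub_one {γ : ℝ} (hγ : Irrational γ) (n : ℕ) :
    Ssum (-γ) n - 1 = -(Ssum γ n - 1) := by
  induction n with
  | zero => simp only [Ssum_zero, sub_self, neg_zero]
  | succ n ih =>
    rw [Ssum_succ, Ssum_succ, mul_neg, sfun_neg_of_irrational (hγ.natCast_mul n.succ_ne_zero)]
    linarith

lemma natCeil_eq_of_le_of_lt {x : ℝ} {n : ℕ} (hle : x ≤ n) (hlt : n < x + 1) : ⌈x⌉₊ = n := by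
  refine le_antisymm (Nat.ceil_le.mpr hle) (Nat.lt_add_one_iff.mp ?_)
  exact_mod_cast hlt.trans_le (add_le_add_left (Nat.le_ceil x) 1)

lemma sum_range_ite_lt {x : ℝ} {n : ℕ} (hx : x ≤ n) :
    ∑ u ∈ range n, (if (u : ℝ) < x then (1 : ℝ) else -1) = 2 * ⌈x⌉₊ - n := by
  have hfilter : ({u ∈ range n | (u : ℝ) < x} : Finset ℕ) = range ⌈x⌉₊ := by
    ext u
    have := Nat.ceil_le.mpr hx
    simp only [mem_filter, mem_range, ← Nat.lt_ceil]
    omega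
  have hsign (u : ℕ) :
      (if (u : ℝ) < x then (1 : ℝ) else -1) = 2 * (if (u : ℝ) < x then 1 else 0) - 1 := by
    split_ifs <;> norm_num
  simp only [hsign, sum_sub_distrib, ← mul_sum, sum_boole, hfilter, card_range, sum_const,
    nsmul_eq_mul, mul_one]

lemma Stil_eq_sum_Ico (α : ℝ) (r R1 R0 : ℕ) :
    Stil α r R1 R0 = ∑ i ∈ Ico (r - R0 + min R1 1) (r + 1), sfun (i * α) := by
  rw [Ico_add_one_right_eq_Icc]
  rcases R0.eq_zero_or_pos with rfl | hR0 <;> rcases R1.eq_zero_or_pos with rfl | hR1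
  · simp [Stil]
  · simp [Stil, hR1.ne', Nat.min_eq_right hR1]
  · simp [Stil, hR0.ne']
  · simp [Stil, hR0.ne', hR1.ne', Nat.min_eq_right hR1]

end SignSums

section FirstDigit

variable {α : ℝ}

lemma gaussMap_nonneg (α : ℝ) : 0 ≤ gaussMap α := Int.fract_nonneg _

lemma gaussMap_lt_one (α : ℝ) : gaussMap α < 1 := Int.fract_lt_one _

lemma pq_one_add_gaussMap (hα : 0 ≤ α) : pq α 1 + gaussMap α = α⁻¹ := by
  change (⌊α⁻¹⌋₊ : ℝ) + Int.fract α⁻¹ = α⁻¹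
  rw [natCast_floor_eq_intCast_floor (inv_nonneg.mpr hα), Int.floor_add_fract]

lemma irrational_gaussMap (hα : Irrational α) : Irrational (gaussMap α) :=
  irrational_fract (irrational_inv_iff.mpr hα)

lemma gaussMap_pos (hα : Irrational α) : 0 < gaussMap α :=
  (gaussMap_nonneg α).lt_of_ne' (irrational_gaussMap hα).ne_zero

lemma abar_eq (α : ℝ) : abar α = gaussMap α / (1 - gaussMap α) := rfl

lemma irrational_abar (hα : Irrational α) : Irrational (abar α) := by
  have hne : 1 - gaussMap α ≠ 0 := (sub_pos.mpr (gaussMap_lt_one α)).ne'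
  have habar : abar α = (1 - gaussMap α)⁻¹ - (1 : ℕ) := by
    rw [abar_eq]
    field_simp
    push_cast
    ring
  rw [habar]
  refine (irrational_inv_iff.mpr ?_).sub_natCast 1
  exact_mod_cast (irrational_gaussMap hα).natCast_sub 1

end FirstDigit

section Levels

variable {α : ℝ}

/-- `c_k = ⌈k G(α)⌉`, the number of indices `i < k` whose level `{r : ⌊r α⌋ = i}` has the larger
length `a_1 + 1` (see `count_tcount_eq`). -/
def longCount (α : ℝ) (k : ℕ) : ℕ := ⌈k * gaussMap α⌉₊

/-- `δ_k = c_k - k G(α)`, the distance `r_k - k/α` from `k/α` to the first integer of level `k`. -/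
def levelOffset (α : ℝ) (k : ℕ) : ℝ := longCount α k - k * gaussMap α

lemma longCount_mono (α : ℝ) : Monotone (longCount α) := fun k l hkl => by
  have := gaussMap_nonneg α
  unfold longCount
  gcongr

lemma longCount_succ_le (α : ℝ) (k : ℕ) : longCount α (k + 1) ≤ longCount α k + 1 := by
  have hle : (k : ℝ) * gaussMap α ≤ longCount α k := Nat.le_ceil _
  have hlt := gaussMap_lt_one α
  refine Nat.ceil_le.mpr ?_
  push_cast
  linarith

lemma longCount_zero (α : ℝ) : longCount α 0 = 0 := by simp [longCount]

lemma longCount_le_self (α : ℝ) (k : ℕ) : longCount α k ≤ k :=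
  Nat.ceil_le.mpr (mul_le_of_le_one_right k.cast_nonneg (gaussMap_lt_one α).le)

lemma longCount_succ_eq_or (α : ℝ) (k : ℕ) :
    longCount α (k + 1) = longCount α k + 1 ∨ longCount α (k + 1) = longCount α k := by
  have hmono := longCount_mono α (Nat.le_add_right k 1)
  have hstep := longCount_succ_le α k
  omega

lemma levelOffset_nonneg (α : ℝ) (k : ℕ) : 0 ≤ levelOffset α k :=
  sub_nonneg.mpr (Nat.le_ceil _)

lemma levelOffset_lt_one (α : ℝ) (k : ℕ) : levelOffset α k < 1 :=
  sub_left_lt_of_lt_add (Nat.ceil_lt_add_one (mul_nonneg k.cast_nonneg (gaussMap_nonneg α)))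

lemma levelOffset_lt_gaussMap {k : ℕ} (hlong : longCount α (k + 1) = longCount α k + 1) :
    levelOffset α k < gaussMap α := by
  have h := levelOffset_lt_one α (k + 1)
  simp only [levelOffset, hlong] at h ⊢
  push_cast at h
  linarith

lemma gaussMap_le_levelOffset {k : ℕ} (hshort : longCount α (k + 1) = longCount α k) :
    gaussMap α ≤ levelOffset α k := by
  have h := levelOffset_nonneg α (k + 1)
  simp only [levelOffset, hshort] at h ⊢
  push_cast at h
  linarith

lemma setOf_floor_mul_eq (hα : 0 < α) (k : ℕ) :
    {r : ℕ | ⌊(r : ℝ) * α⌋ = (k : ℤ)} = Set.Ico ⌈k * α⁻¹⌉₊ ⌈(k + 1 : ℕ) * α⁻¹⌉₊ := by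
  ext r
  simp only [Set.mem_ofPred_eq, Set.mem_Ico, Int.floor_eq_iff, Nat.ceil_le, Nat.lt_ceil,
    ← div_eq_mul_inv, div_le_iff₀ hα, lt_div_iff₀ hα, Int.cast_natCast, Nat.cast_succ]

lemma ceil_mul_inv (hα : 0 ≤ α) (k : ℕ) : ⌈k * α⁻¹⌉₊ = k * pq α 1 + longCount α k := by
  have hsplit : k * α⁻¹ = k * gaussMap α + (k * pq α 1 : ℕ) := by
    rw [← pq_one_add_gaussMap hα]
    push_cast
    ring
  rw [hsplit, Nat.ceil_add_natCast (mul_nonneg k.cast_nonneg (gaussMap_nonneg α)), add_comm,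
    longCount]

lemma tcount_add_longCount (hα : 0 < α) (k : ℕ) :
    tcount α k + longCount α k = pq α 1 + longCount α (k + 1) := by
  have hmono := longCount_mono α (Nat.le_add_right k 1)
  have hcard : tcount α k = ⌈(k + 1 : ℕ) * α⁻¹⌉₊ - ⌈k * α⁻¹⌉₊ := by
    rw [tcount, setOf_floor_mul_eq hα, ← coe_Ico, Set.ncard_coe_finset, Nat.card_Ico]
  rw [hcard, ceil_mul_inv hα.le, ceil_mul_inv hα.le, add_one_mul]
  omega

lemma tcount_eq_pq_add_one_iff (hα : 0 < α) (k : ℕ) :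
    tcount α k = pq α 1 + 1 ↔ longCount α (k + 1) = longCount α k + 1 := by
  have := tcount_add_longCount hα k
  omega

lemma rmin_eq_s10 (hα : 0 < α) (hpq : 0 < pq α 1) (k : ℕ) :
    rmin α k = k * pq α 1 + longCount α k := by
  have hmono := longCount_mono α (Nat.le_add_right k 1)
  rw [rmin, setOf_floor_mul_eq hα, ceil_mul_inv hα.le, ceil_mul_inv hα.le, add_one_mul]
  exact csInf_Ico (by omega)

lemma rmin_succ (hα : 0 < α) (hpq : 0 < pq α 1) (k : ℕ) :
    rmin α (k + 1) = rmin α k + tcount α k := by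
  have := tcount_add_longCount hα k
  rw [rmin_eq_s10 hα hpq, rmin_eq_s10 hα hpq, add_one_mul]
  omega

lemma rmin_eq_add_levelOffset (hα : 0 < α) (hpq : 0 < pq α 1) (k : ℕ) :
    (rmin α k : ℝ) = k * α⁻¹ + levelOffset α k := by
  rw [rmin_eq_s10 hα hpq, ← pq_one_add_gaussMap hα.le, levelOffset]
  push_cast
  ring

end Levels

section LongLevels

variable {α : ℝ}

lemma count_tcount_eq (hα : 0 < α) [DecidablePred fun k => tcount α k = pq α 1 + 1] (k : ℕ) :
    Nat.count (fun k => tcount α k = pq α 1 + 1) k = longCount α k := by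
  induction k with
  | zero => rw [Nat.count_zero, longCount_zero]
  | succ k ih =>
    have hstep := longCount_succ_eq_or α k
    rw [Nat.count_succ, ih]
    simp only [tcount_eq_pq_add_one_iff hα]
    split_ifs <;> omega

lemma infinite_tcount (hα : 0 < α) (hG : 0 < gaussMap α) :
    {k | tcount α k = pq α 1 + 1}.Infinite := by
  classical
  intro hfin
  obtain ⟨n, hn⟩ := exists_nat_gt (hfin.toFinset.card / gaussMap α)
  have hcount : longCount α n ≤ hfin.toFinset.card := by
    rw [← count_tcount_eq hα, Nat.count_eq_card_filter_range]
    exact card_le_card fun k hk => hfin.mem_toFinset.mpr (mem_filter.mp hk).2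
  have hlarge : (hfin.toFinset.card : ℝ) < n * gaussMap α := (div_lt_iff₀ hG).mp hn
  exact hcount.not_gt (Nat.lt_ceil.mpr hlarge)

lemma longCount_kseq (hα : 0 < α) (hG : 0 < gaussMap α) (j : ℕ) :
    longCount α (kseq α j) = j := by
  classical
  rw [← count_tcount_eq hα, kseq, Nat.count_nth_of_infinite (infinite_tcount hα hG)]

lemma longCount_kseq_succ (hα : 0 < α) (hG : 0 < gaussMap α) (j : ℕ) :
    longCount α (kseq α j + 1) = j + 1 := by
  have hlong : tcount α (kseq α j) = pq α 1 + 1 :=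
    Nat.nth_mem_of_infinite (infinite_tcount hα hG) j
  rw [(tcount_eq_pq_add_one_iff hα _).mp hlong, longCount_kseq hα hG]

lemma longCount_kseq_add (hα : 0 < α) (hG : 0 < gaussMap α) {j m : ℕ}
    (hm : kseq α j + m ≤ kseq α (j + 1)) : longCount α (kseq α j + m) = j + min m 1 := by
  rcases m.eq_zero_or_pos with rfl | hpos
  · rw [add_zero, longCount_kseq hα hG, Nat.zero_min, add_zero]
  · have hlower := longCount_mono α (Nat.add_le_add_left (Nat.one_le_of_lt hpos) (kseq α j))
    have hupper := longCount_mono α hm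
    rw [longCount_kseq hα hG] at hupper
    rw [longCount_kseq_succ hα hG] at hlower
    omega

lemma kseq_add_le (hα : 0 < α) (hpq : 0 < pq α 1) (hG : 0 < gaussMap α) {j m : ℕ}
    (hm : m * pq α 1 < rmin α (kseq α (j + 1)) - rmin α (kseq α j)) :
    kseq α j + m ≤ kseq α (j + 1) := by
  rw [rmin_eq_s10 hα hpq, rmin_eq_s10 hα hpq, longCount_kseq hα hG, longCount_kseq hα hG] at hm
  by_contra! hcon
  have hmul := Nat.mul_le_mul_right (pq α 1) (Nat.succ_le_of_lt hcon)
  rw [Nat.succ_mul, add_mul] at hmul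
  omega

lemma rmin_kseq_add_s10 (hα : 0 < α) (hpq : 0 < pq α 1) (hG : 0 < gaussMap α) {j m : ℕ}
    (hm : kseq α j + m ≤ kseq α (j + 1)) :
    rmin α (kseq α j + m) = rmin α (kseq α j) + m * pq α 1 + min m 1 := by
  rw [rmin_eq_s10 hα hpq, rmin_eq_s10 hα hpq, longCount_kseq_add hα hG hm, longCount_kseq hα hG]
  ring

lemma ifun_eq (hα : 0 < α) (hG : 0 < gaussMap α) {j m : ℕ}
    (hm : kseq α j + m ≤ kseq α (j + 1)) :
    ifun α j m = kseq α j + m - longCount α (kseq α j + m) := by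
  have hj := longCount_le_self α (kseq α j)
  rw [longCount_kseq hα hG] at hj
  rw [ifun, longCount_kseq_add hα hG hm]
  omega

end LongLevels

section LevelSums

variable {α : ℝ}

lemma sfun_rmin_add (hα : 0 < α) (hpq : 0 < pq α 1) {k u : ℕ} (hu : u < tcount α k) :
    sfun ((rmin α k + u : ℕ) * α) = if (u : ℝ) < α⁻¹ / 2 - levelOffset α k then 1 else -1 := by
  have hpos : ((rmin α k + u : ℕ) : ℝ) * α = (k : ℤ) + (levelOffset α k + u) * α := by
    rw [Nat.cast_add, rmin_eq_add_levelOffset hα hpq, Int.cast_natCast]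
    field_simp
    ring
  have hend : levelOffset α k + u < α⁻¹ := by
    have hlast : (rmin α k : ℝ) + u + 1 ≤ rmin α (k + 1) := by
      rw [rmin_succ hα hpq]
      exact_mod_cast Nat.add_le_add_left (Nat.succ_le_of_lt hu) (rmin α k)
    rw [rmin_eq_add_levelOffset hα hpq, rmin_eq_add_levelOffset hα hpq, Nat.cast_succ] at hlast
    linarith [levelOffset_lt_one α (k + 1)]
  have hswitch : (levelOffset α k + u) * α < 1 / 2 ↔ (u : ℝ) < α⁻¹ / 2 - levelOffset α k := by
    rw [← lt_div_iff₀ hα, lt_sub_iff_add_lt', div_eq_mul_inv, one_div_mul_eq_div]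
  have hoffset := levelOffset_nonneg α k
  rw [hpos, sfun_intCast_add _ (by positivity) ((lt_div_iff₀ hα).mp (by rwa [one_div]))]
  simp only [hswitch]

lemma sum_level (hα : 0 < α) (hpq : 0 < pq α 1) (k : ℕ) :
    ∑ u ∈ range (tcount α k), sfun ((rmin α k + u : ℕ) * α) =
      2 * ⌈α⁻¹ / 2 - levelOffset α k⌉₊ - tcount α k := by
  have hlength : (tcount α k : ℝ) = α⁻¹ + levelOffset α (k + 1) - levelOffset α k := by
    have h := congrArg (Nat.cast (R := ℝ)) (rmin_succ hα hpq k)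
    rw [Nat.cast_add, rmin_eq_add_levelOffset hα hpq, rmin_eq_add_levelOffset hα hpq,
      Nat.cast_succ] at h
    linarith
  have hinv := inv_pos.mpr hα
  rw [sum_congr rfl fun u hu => sfun_rmin_add hα hpq (mem_range.mp hu), sum_range_ite_lt]
  linarith [levelOffset_nonneg α (k + 1)]

lemma inv_div_two_of_pq_eq (hα : 0 ≤ α) {b : ℕ} (hb : pq α 1 = 2 * b + 1) :
    α⁻¹ / 2 = b + (1 + gaussMap α) / 2 := by
  rw [← pq_one_add_gaussMap hα, hb]
  push_cast
  ring

lemma sum_level_of_long (hα : 0 < α) (hodd : Odd (pq α 1)) {k : ℕ}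
    (hlong : longCount α (k + 1) = longCount α k + 1) :
    ∑ u ∈ range (tcount α k), sfun ((rmin α k + u : ℕ) * α) = 0 := by
  have hpq := hodd.pos
  obtain ⟨b, hb⟩ := hodd
  have hlength : tcount α k = 2 * b + 2 := by
    rw [(tcount_eq_pq_add_one_iff hα k).mpr hlong, hb]
  have hoffset := levelOffset_lt_gaussMap hlong
  have hceil : ⌈α⁻¹ / 2 - levelOffset α k⌉₊ = b + 1 := by
    rw [inv_div_two_of_pq_eq hα.le hb]
    have hnonneg := levelOffset_nonneg α k
    have hG := gaussMap_lt_one α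
    apply natCeil_eq_of_le_of_lt <;> push_cast <;> linarith
  rw [sum_level hα hpq, hceil, hlength]
  push_cast
  ring

lemma sfun_mul_neg_abar {k : ℕ} (hshort : longCount α (k + 1) = longCount α k) :
    sfun ((k - longCount α k + 1 : ℕ) * -abar α) =
      if levelOffset α k < (1 + gaussMap α) / 2 then 1 else -1 := by
  have hden : 0 < 1 - gaussMap α := sub_pos.mpr (gaussMap_lt_one α)
  have hpoint : ((k - longCount α k + 1 : ℕ) : ℝ) * -abar α =
      (-(longCount α k : ℤ) : ℤ) + (levelOffset α k - gaussMap α) / (1 - gaussMap α) := by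
    rw [abar_eq, levelOffset]
    push_cast [Nat.cast_sub (longCount_le_self α k)]
    field_simp
    ring
  have hhalf : (levelOffset α k - gaussMap α) / (1 - gaussMap α) < 1 / 2 ↔
      levelOffset α k < (1 + gaussMap α) / 2 := by
    rw [div_lt_iff₀ hden]
    constructor <;> intro h <;> linarith
  have hnonneg : 0 ≤ levelOffset α k - gaussMap α :=
    sub_nonneg.mpr (gaussMap_le_levelOffset hshort)
  have hlt_one : (levelOffset α k - gaussMap α) / (1 - gaussMap α) < 1 :=
    (div_lt_one hden).mpr (sub_lt_sub_right (levelOffset_lt_one α k) _)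
  rw [hpoint, sfun_intCast_add _ (div_nonneg hnonneg hden.le) hlt_one]
  simp only [hhalf]

lemma sum_level_of_short (hα : 0 < α) (hodd : Odd (pq α 1)) {k : ℕ}
    (hshort : longCount α (k + 1) = longCount α k) :
    ∑ u ∈ range (tcount α k), sfun ((rmin α k + u : ℕ) * α) =
      sfun ((k - longCount α k + 1 : ℕ) * -abar α) := by
  have hpq := hodd.pos
  obtain ⟨b, hb⟩ := hodd
  have hlength : tcount α k = 2 * b + 1 := by
    have := tcount_add_longCount hα k
    omega
  have hoffset := gaussMap_le_levelOffset hshort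
  have hlt_one := levelOffset_lt_one α k
  have hG := gaussMap_nonneg α
  rw [sum_level hα hpq, sfun_mul_neg_abar hshort, hlength, inv_div_two_of_pq_eq hα.le hb]
  split_ifs with hswitch
  · have hceil : ⌈b + (1 + gaussMap α) / 2 - levelOffset α k⌉₊ = b + 1 := by
      apply natCeil_eq_of_le_of_lt <;> push_cast <;> linarith
    rw [hceil]
    push_cast
    ring
  · have hceil : ⌈b + (1 + gaussMap α) / 2 - levelOffset α k⌉₊ = b := by
      apply natCeil_eq_of_le_of_lt <;> linarith
    rw [hceil]
    push_cast
    ring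

lemma sum_range_rmin (hα : 0 < α) (hodd : Odd (pq α 1)) (k : ℕ) :
    ∑ i ∈ range (rmin α k), sfun (i * α) = Ssum (-abar α) (k - longCount α k) - 1 := by
  induction k with
  | zero => simp [rmin_eq_s10 hα hodd.pos, longCount_zero, Ssum_zero]
  | succ k ih =>
    have hk := longCount_le_self α k
    rw [rmin_succ hα hodd.pos, sum_range_add, ih]
    rcases longCount_succ_eq_or α k with hlong | hshort
    · rw [sum_level_of_long hα hodd hlong, hlong, Nat.add_sub_add_right, add_zero]
    · rw [sum_level_of_short hα hodd hshort, hshort, Nat.sub_add_comm hk, Ssum_succ]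
      ring

end LevelSums

theorem renorm_odd_general {α : ℝ} (hα : 0 < α) (hG : 0 < gaussMap α) (hodd : Odd (pq α 1))
    {r j R1 R0 : ℕ} (hdec : r = rmin α (kseq α j) + R1 * qden α 1 + R0)
    (hlt : R1 * qden α 1 + R0 < rmin α (kseq α (j + 1)) - rmin α (kseq α j)) :
    Ssum α r = Ssum (-abar α) (ifun α j R1) - 1 + Stil α r R1 R0 := by
  have hk : kseq α j + R1 ≤ kseq α (j + 1) :=
    kseq_add_le hα hodd.pos hG (lt_of_le_of_lt (Nat.le_add_right _ R0) hlt)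
  have hstart : rmin α (kseq α j + R1) = r - R0 + min R1 1 := by
    rw [rmin_kseq_add_s10 hα hodd.pos hG hk, hdec, Nat.add_sub_cancel, qden]
  have hle : rmin α (kseq α j + R1) ≤ r + 1 := by omega
  calc Ssum α r
      = ∑ i ∈ range (rmin α (kseq α j + R1)), sfun (i * α)
          + ∑ i ∈ Ico (rmin α (kseq α j + R1)) (r + 1), sfun (i * α) := by
        rw [Ssum_eq_sum, sum_range_add_sum_Ico _ hle]
    _ = Ssum (-abar α) (ifun α j R1) - 1 + Stil α r R1 R0 := by
        rw [sum_range_rmin hα hodd, ifun_eq hα hG hk, Stil_eq_sum_Ico, hstart]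

/-- if `a_1` is odd then, with `r = r_{k_j} + R₁ q₁ + R₀`,
`S_r(α) = S_{i(r)}(-ᾱ_1) - 1 + S̃(r)`; moreover
`S_n(-ᾱ_1) - 1 = -(S_n(ᾱ_1) - 1)` for all `n ≥ 0`. -/
theorem renorm_odd (α : ℝ) (hirr : Irrational α) (h0 : 0 < α) (h1 : α < 1)
    (hOdd : Odd (pq α 1)) (r j R1 R0 : ℕ)
    (hdec : r = rmin α (kseq α j) + R1 * qden α 1 + R0)
    (hlt : R1 * qden α 1 + R0 < rmin α (kseq α (j + 1)) - rmin α (kseq α j))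
    (hR1 : R1 ≤ pq α 2 + 1) (hR0 : R0 < qden α 1) :
    Ssum α r = Ssum (-(abar α)) (ifun α j R1) - 1 + Stil α r R1 R0 ∧
    ∀ n : ℕ, Ssum (-(abar α)) n - 1 = -(Ssum (abar α) n - 1) := by
  exact ⟨renorm_odd_general h0 (gaussMap_pos hirr) hOdd hdec hlt,
    Ssum_neg_sub_one (irrational_abar hirr)⟩
end
end

section
/- Let α ∈ (0,1) be irrational. For every integer n ≥ 2, letting N = ord(n−1), one has n·D_n*(α) = sup_{β∈(0,1)} |d_n(α, β)| ≤ 1 + 3N + (1/4) Σ_{m=1}^{N+1} a_m. -/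
open Filter Finset

noncomputable section

/-!
Up to the value at `x = 0`, the discrepancy function `β ↦ d_n(α, β)` is the sum
`F_n(x) = ∑_{r<n} {x + rα}` at `x = -β`, so it suffices to bound how much `F_n` varies with `x`.
Write `n = (c_0 + 1) + c_1 q_1 + ⋯ + c_N q_N` and cut `F_n` into consecutive blocks of these
lengths. In a block of `b ≤ a_{m+1}` periods of length `q = q_m`, each period is compared with the
rational rotation by `p_m / q_m`, for which the floors sum to `⌊q x⌋` up to a constant. Hence the
block varies, up to a carry of at most `1`, like the sum of the `b` points `q x + jκ`, `j < b`,
where `κ = q (q α - p)` satisfies `1 / (a_{m+1} + 2) ≤ |κ| ≤ 1 / a_{m+1}`. These `b` points turn at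
most once around the circle, so their discrepancy is explicit, and completing a square bounds it by
`a_{m+1} / 4 + O(1)`. The block of length `c_0 + 1` is already of this last kind, with `κ = α`.
-/

/-- The sum `∑_{r<m} {x + rα}`, viewed as a function of the base point `x`; its oscillation in `x`
controls the discrepancy of `(rα)_{r<m}`. -/
def fractSum (α : ℝ) (m : ℕ) (x : ℝ) : ℝ := ∑ r ∈ range m, Int.fract (x + r * α)

/-- The integer companion `∑_{r<m} ⌊x + rα⌋` of `fractSum`, which is monotone in `x` and `α`. -/
def floorSum (α : ℝ) (m : ℕ) (x : ℝ) : ℤ := ∑ r ∈ range m, ⌊x + r * α⌋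

section FractionalPartSums

theorem fractSum_add (α : ℝ) (m k : ℕ) (x : ℝ) :
    fractSum α (m + k) x = fractSum α m x + fractSum α k (x + m * α) := by
  simp only [fractSum, sum_range_add, Nat.cast_add, add_mul, add_assoc]

theorem floorSum_add (α : ℝ) (m k : ℕ) (x : ℝ) :
    floorSum α (m + k) x = floorSum α m x + floorSum α k (x + m * α) := by
  simp only [floorSum, sum_range_add, Nat.cast_add, add_mul, add_assoc]

theorem floorSum_succ (α : ℝ) (m : ℕ) (x : ℝ) :
    floorSum α (m + 1) x = floorSum α m x + ⌊x + m * α⌋ :=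
  sum_range_succ _ _

theorem floorSum_add_intCast (α : ℝ) (m : ℕ) (x : ℝ) (k : ℤ) :
    floorSum α m (x + k) = floorSum α m x + m * k := by
  have hterm : ∀ r : ℕ, ⌊x + k + r * α⌋ = ⌊x + r * α⌋ + k := fun r => by
    rw [add_right_comm, Int.floor_add_intCast]
  simp only [floorSum, hterm, sum_add_distrib, sum_const, card_range, nsmul_eq_mul]

theorem fractSum_sub_fractSum (α : ℝ) (m : ℕ) (x y : ℝ) :
    fractSum α m x - fractSum α m y = m * (x - y) - (floorSum α m x - floorSum α m y) := by
  simp only [fractSum, floorSum, Int.fract, sum_sub_distrib, sum_add_distrib, sum_const,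
    card_range, nsmul_eq_mul, Int.cast_sum]
  ring

theorem fractSum_neg (α : ℝ) (m : ℕ) (x : ℝ) :
    fractSum (-α) m x = fractSum α m (x - (m - 1) * α) := by
  rw [fractSum, ← sum_range_reflect]
  refine sum_congr rfl fun r hr => ?_
  have hr : r + 1 ≤ m := mem_range.mp hr
  rw [Nat.sub_sub, Nat.cast_sub (by omega)]
  push_cast
  ring_nf

theorem fract_add_sub_fract (x t : ℝ) :
    Int.fract (x + t) - Int.fract t =
      (if Int.fract t < Int.fract (-x) then 1 else 0) - Int.fract (-x) := by
  have ht := Int.floor_add_fract t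
  have hx := Int.floor_add_fract (-x)
  have ht0 := Int.fract_nonneg t
  have ht1 := Int.fract_lt_one t
  have hx0 := Int.fract_nonneg (-x)
  have hx1 := Int.fract_lt_one (-x)
  suffices Int.fract (x + t) =
      Int.fract t + (if Int.fract t < Int.fract (-x) then 1 else 0) - Int.fract (-x) by linarith
  split_ifs with h
  · exact Int.fract_eq_iff.mpr
      ⟨by linarith, by linarith, ⌊t⌋ - ⌊-x⌋ - 1, by push_cast; linarith⟩
  · exact Int.fract_eq_iff.mpr ⟨by linarith, by linarith, ⌊t⌋ - ⌊-x⌋, by push_cast; linarith⟩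

theorem fractSum_sub_fractSum_zero (α : ℝ) (n : ℕ) (x : ℝ) :
    fractSum α n x - fractSum α n 0 = ddisc α (Int.fract (-x)) n := by
  simp only [fractSum, ddisc, zero_add, ← sum_sub_distrib, fract_add_sub_fract]
  simp [mul_comm]

end FractionalPartSums

section SmallRotation

variable {κ w A : ℝ} {b : ℕ}

theorem ddisc_eq_min_sub (hκ : 0 < κ) (hb : ((b : ℝ) - 1) * κ < 1) :
    ddisc κ w b = (min b ⌈w / κ⌉₊ : ℕ) - b * w := by
  have hlt : ∀ j ∈ range b, (Int.fract ((j : ℝ) * κ) < w ↔ j < ⌈w / κ⌉₊) := fun j hj => by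
    have hj : (j : ℝ) + 1 ≤ b := by exact_mod_cast mem_range.mp hj
    have hj1 : (j : ℝ) * κ < 1 :=
      (mul_le_mul_of_nonneg_right (by linarith) hκ.le).trans_lt hb
    rw [Int.fract_eq_self.mpr ⟨by positivity, hj1⟩, Nat.lt_ceil, lt_div_iff₀ hκ]
  have hfilter : {j ∈ range b | j < ⌈w / κ⌉₊} = range (min b ⌈w / κ⌉₊) := by
    ext j; simp
  rw [ddisc, sum_boole, filter_congr hlt, hfilter, card_range, mul_comm]

theorem ddisc_le_of_one_le_mul (hκ : 0 < κ) (hb : ((b : ℝ) - 1) * κ < 1) (hw : 0 ≤ w)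
    (hA : 1 ≤ A) (hAκ : 1 ≤ A * κ) : ddisc κ w b ≤ (A + 3) / 4 := by
  rw [ddisc_eq_min_sub hκ hb]
  set k := min b ⌈w / κ⌉₊
  have hkb : (k : ℝ) ≤ b := by exact_mod_cast min_le_left _ _
  have hkw : ((k : ℝ) - 1) * κ ≤ w := by
    have hk : (k : ℝ) ≤ ⌈w / κ⌉₊ := by exact_mod_cast min_le_right _ _
    have hceil := Nat.ceil_lt_add_one (div_nonneg hw hκ.le)
    rw [← le_div_iff₀ hκ]
    linarith
  have hk0 : (0 : ℝ) ≤ k * (k - 1) := by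
    rcases Nat.eq_zero_or_pos k with hk | hk
    · simp [hk]
    · exact mul_nonneg (Nat.cast_nonneg k) (sub_nonneg.mpr (by exact_mod_cast hk))
  have hquad : A * (k - k * ((k - 1) * κ)) ≤ A * ((A + 3) / 4) :=
    calc A * (k - k * ((k - 1) * κ)) = A * k - k * (k - 1) * (A * κ) := by ring
      _ ≤ A * k - k * (k - 1) := sub_le_sub_left (le_mul_of_one_le_right hk0 hAκ) _
      _ = (A + 1) ^ 2 / 4 - (2 * k - (A + 1)) ^ 2 / 4 := by ring
      _ ≤ (A + 1) ^ 2 / 4 := sub_le_self _ (by positivity)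
      _ ≤ A * ((A + 3) / 4) := by linarith
  calc (k : ℝ) - b * w ≤ k - k * w := by gcongr
    _ ≤ k - k * ((k - 1) * κ) := by gcongr
    _ ≤ (A + 3) / 4 := le_of_mul_le_mul_left hquad (by linarith)

theorem sub_mul_le_ddisc {M : ℝ} (hκ : 0 < κ) (hb : ((b : ℝ) - 1) * κ < 1) (hw : 0 ≤ w)
    (hw1 : w ≤ 1) (hMb : M ≤ b) (hMκ : M * κ ≤ 1) : (M - b) * w ≤ ddisc κ w b := by
  rw [ddisc_eq_min_sub hκ hb]
  rcases le_total b ⌈w / κ⌉₊ with h | h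
  · rw [min_eq_left h]
    exact (mul_nonpos_of_nonpos_of_nonneg (sub_nonpos.mpr hMb) hw).trans
      (sub_nonneg.mpr (mul_le_of_le_one_right (Nat.cast_nonneg b) hw1))
  · rw [min_eq_right h]
    have hMw : M * w ≤ w / κ := by
      rw [le_div_iff₀ hκ, mul_right_comm]
      exact mul_le_of_le_one_left hw hMκ
    linarith [Nat.le_ceil (w / κ)]

theorem fractSum_sub_fractSum_le (hκ : 0 < κ) (hbκ : b * κ ≤ 1) (hA : 1 ≤ A) (hAκ : 1 ≤ A * κ)
    (x y : ℝ) : fractSum κ b x - fractSum κ b y ≤ (A + 3) / 4 := by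
  have hb : ((b : ℝ) - 1) * κ < 1 := by linarith
  have hx := ddisc_le_of_one_le_mul hκ hb (Int.fract_nonneg (-x)) hA hAκ
  have hy := sub_mul_le_ddisc hκ hb (Int.fract_nonneg (-y)) (Int.fract_lt_one _).le le_rfl hbκ
  rw [← fractSum_sub_fractSum_zero] at hx hy
  linarith

end SmallRotation

section RationalApproximation

variable {α : ℝ} {p : ℤ} {q : ℕ}

theorem sum_ediv_add_mul_of_isCoprime (hq : q ≠ 0) (hpq : IsCoprime p q) (m : ℤ) :
    ∑ s ∈ range q, (m + s * p) / (q : ℤ) = m + ∑ s ∈ range q, s * p / (q : ℤ) := by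
  have hq' : (q : ℤ) ≠ 0 := by exact_mod_cast hq
  -- The difference of the two sides has the coprime periods `p` and `q`, hence period `1`.
  let g : ℤ → ℤ := fun m => ∑ s ∈ range q, (m + s * p) / (q : ℤ) - m
  have hgp : Function.Periodic g p := fun m => by
    have htel := sum_range_sub (fun s : ℕ => (m + s * p) / (q : ℤ)) q
    rw [Int.add_mul_ediv_left _ _ hq', sum_sub_distrib] at htel
    simp only [g, add_assoc m p, add_comm p, ← add_one_mul]
    push_cast at htel
    simp only [zero_mul, add_zero] at htel
    linarith
  have hgq : Function.Periodic g q := fun m => by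
    have hterm : ∀ s : ℕ, (m + q + s * p) / (q : ℤ) = (m + s * p) / q + 1 := fun s => by
      rw [add_right_comm, Int.add_ediv_of_dvd_right dvd_rfl, Int.ediv_self hq']
    simp only [g, hterm, sum_add_distrib, sum_const, card_range, nsmul_eq_mul]
    ring
  obtain ⟨u, v, huv⟩ := hpq
  have hg1 : Function.Periodic g 1 := huv ▸ (hgp.int_mul u).add_period (hgq.int_mul v)
  have hg := hg1.int_mul m 0
  simp only [g, Int.cast_id, mul_one, zero_add, sub_zero] at hg
  linarith

theorem floorSum_div (hq : q ≠ 0) (hpq : IsCoprime p q) (y : ℝ) :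
    floorSum (p / q) q y = ⌊q * y⌋ + floorSum (p / q) q 0 := by
  have hfloor : ∀ (z : ℝ) (s : ℕ), ⌊z + s * (p / q : ℝ)⌋ = (⌊q * z⌋ + s * p) / (q : ℤ) := by
    intro z s
    have hz : z + s * (p / q : ℝ) = (q * z + ((s * p : ℤ) : ℝ)) / q := by
      push_cast
      field_simp
    rw [hz, Int.floor_div_natCast, Int.floor_add_intCast]
  simp only [floorSum, hfloor]
  rw [sum_ediv_add_mul_of_isCoprime hq hpq, mul_zero, Int.floor_zero]
  simp only [zero_add]

theorem floor_add_le_floorSum (hq : q ≠ 0) (hpq : IsCoprime p q) (hα : 0 ≤ q * α - p) (y : ℝ) :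
    ⌊q * y⌋ + floorSum (p / q) q 0 ≤ floorSum α q y := by
  rw [← floorSum_div hq hpq]
  have hpα : (p / q : ℝ) ≤ α := by
    rw [div_le_iff₀ (by positivity)]
    linarith
  exact sum_le_sum fun s _ => by gcongr

theorem floorSum_le_floor_add (hq : q ≠ 0) (hpq : IsCoprime p q) (hα : 0 ≤ q * α - p) (y : ℝ) :
    floorSum α q y ≤ ⌊q * (y + (q * α - p))⌋ + floorSum (p / q) q 0 := by
  rw [← floorSum_div hq hpq]
  refine sum_le_sum fun s hs => Int.floor_le_floor ?_
  have hsq : (s : ℝ) ≤ q := by exact_mod_cast (mem_range.mp hs).le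
  have hq0 : (0 : ℝ) < q := by positivity
  have hs1 : (s / q : ℝ) * (q * α - p) ≤ q * α - p :=
    mul_le_of_le_one_left hα ((div_le_one hq0).mpr hsq)
  have hsα : (s / q : ℝ) * (q * α - p) = s * α - s * (p / q) := by field_simp
  linarith

theorem exists_floorSum_mul_sub_mem_Icc (hq : q ≠ 0) (hpq : IsCoprime p q)
    (hα : 0 ≤ q * α - p) (b : ℕ) :
    ∃ C : ℤ, ∀ x, floorSum α (b * q) x - floorSum (q * (q * α - p)) b (q * x) ∈
      Set.Icc C (C + (⌊q * x + b * (q * (q * α - p))⌋ - ⌊q * x⌋)) := by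
  set η := q * α - p with hη
  induction b with
  | zero => exact ⟨0, fun x => by simp [floorSum]⟩
  | succ b ih =>
    obtain ⟨C, hC⟩ := ih
    refine ⟨C + floorSum (p / q) q 0 + q * (b * p), fun x => ?_⟩
    have hshift : x + (b * q : ℕ) * α = x + b * η + ((b * p : ℤ) : ℝ) := by
      rw [hη]
      push_cast
      ring
    have hlower := floor_add_le_floorSum hq hpq hα (x + b * η)
    have hupper := floorSum_le_floor_add hq hpq hα (x + b * η)
    rw [← hη, add_assoc, ← add_one_mul, mul_add, mul_left_comm] at hupper
    rw [mul_add, mul_left_comm] at hlower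
    rw [Nat.succ_mul, floorSum_add, floorSum_succ, hshift, floorSum_add_intCast]
    obtain ⟨hC1, hC2⟩ := hC x
    push_cast
    constructor <;> linarith

theorem fractSum_mul_sub_le_of_nonneg (hq : q ≠ 0) (hpq : IsCoprime p q) (hα : 0 ≤ q * α - p)
    {b : ℕ} (hb : b * (q * (q * α - p)) ≤ 1) (x y : ℝ) :
    fractSum α (b * q) x - fractSum α (b * q) y ≤
      fractSum (q * (q * α - p)) b (q * x) - fractSum (q * (q * α - p)) b (q * y) + 1 := by
  obtain ⟨C, hC⟩ := exists_floorSum_mul_sub_mem_Icc hq hpq hα b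
  have hx := (hC x).1
  have hy := (hC y).2
  have hcarry : ⌊q * y + b * (q * (q * α - p))⌋ ≤ ⌊q * y⌋ + 1 := by
    rw [← Int.floor_add_one]
    gcongr
  have hxy : floorSum α (b * q) y - floorSum (q * (q * α - p)) b (q * y) ≤
      floorSum α (b * q) x - floorSum (q * (q * α - p)) b (q * x) + 1 := by linarith
  have hxy' : ((floorSum α (b * q) y : ℝ) - floorSum (q * (q * α - p)) b (q * y)) ≤
      floorSum α (b * q) x - floorSum (q * (q * α - p)) b (q * x) + 1 := by exact_mod_cast hxy
  rw [fractSum_sub_fractSum, fractSum_sub_fractSum]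
  push_cast
  linarith

theorem abs_fractSum_mul_sub_le (hq : q ≠ 0) (hpq : IsCoprime p q) {b : ℕ} {A : ℝ}
    (hb : b * (q * |q * α - p|) ≤ 1) (hA : 1 ≤ A) (hAα : 1 ≤ A * (q * |q * α - p|)) (x y : ℝ) :
    |fractSum α (b * q) x - fractSum α (b * q) y| ≤ (A + 7) / 4 := by
  have hκ : 0 < q * |q * α - p| := pos_of_mul_pos_right (by linarith) (by linarith)
  suffices hosc : ∀ x y, fractSum α (b * q) x - fractSum α (b * q) y ≤ (A + 7) / 4 from
    abs_sub_le_iff.mpr ⟨hosc x y, hosc y x⟩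
  wlog hα : 0 ≤ q * α - p generalizing α p
  · -- Reading the orbit backwards replaces `(α, p)` by `(-α, -p)` and translates the base point.
    have habs : |q * -α - (-p : ℤ)| = |q * α - p| := by
      rw [← abs_neg]
      push_cast
      ring_nf
    intro x y
    have hneg := this (α := -α) (p := -p) hpq.neg_left (by rwa [habs]) (by rwa [habs])
      (by rwa [habs]) (by push_cast; linarith) (x + ((b * q : ℕ) - 1) * α)
      (y + ((b * q : ℕ) - 1) * α)
    simpa only [fractSum_neg, add_sub_cancel_right] using hneg
  rw [abs_of_nonneg hα] at hb hAα hκ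
  intro x y
  linarith [fractSum_mul_sub_le_of_nonneg hq hpq hα hb x y,
    fractSum_sub_fractSum_le hκ hb hA hAα (q * x) (q * y)]

end RationalApproximation

section ContinuedFraction

variable {α : ℝ}

theorem gaussIter_succ (α : ℝ) (m : ℕ) :
    gaussIter α (m + 1) = Int.fract (gaussIter α m)⁻¹ :=
  Function.iterate_succ_apply' gaussMap m α

theorem gaussIter_nonneg (h0 : 0 ≤ α) : ∀ m, 0 ≤ gaussIter α m
  | 0 => h0
  | m + 1 => gaussIter_succ α m ▸ Int.fract_nonneg _

theorem gaussIter_lt_one (h1 : α < 1) : ∀ m, gaussIter α m < 1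
  | 0 => h1
  | m + 1 => gaussIter_succ α m ▸ Int.fract_lt_one _

theorem irrational_gaussIter (hirr : Irrational α) : ∀ m, Irrational (gaussIter α m)
  | 0 => hirr
  | m + 1 => gaussIter_succ α m ▸ (irrational_gaussIter hirr m).inv.sub_intCast _

theorem gaussIter_pos (hirr : Irrational α) (h0 : 0 < α) (m : ℕ) : 0 < gaussIter α m :=
  (gaussIter_nonneg h0.le m).lt_of_ne' (irrational_gaussIter hirr m).ne_zero

theorem inv_gaussIter (h0 : 0 ≤ α) (m : ℕ) :
    (gaussIter α m)⁻¹ = pq α (m + 1) + gaussIter α (m + 1) := by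
  rw [gaussIter_succ, pq, Nat.add_sub_cancel,
    natCast_floor_eq_intCast_floor (inv_nonneg.mpr (gaussIter_nonneg h0 m)), Int.floor_add_fract]

theorem pq_succ_pos (hirr : Irrational α) (h0 : 0 < α) (h1 : α < 1) (m : ℕ) :
    0 < pq α (m + 1) :=
  Nat.floor_pos.mpr ((one_le_inv₀ (gaussIter_pos hirr h0 m)).mpr (gaussIter_lt_one h1 m).le)

theorem pq_one_mul_lt_one (hirr : Irrational α) (h0 : 0 < α) : pq α 1 * α < 1 := by
  have hinv : α⁻¹ = pq α 1 + gaussIter α 1 := inv_gaussIter h0.le 0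
  rw [← lt_div_iff₀ h0, one_div, hinv]
  linarith [gaussIter_pos hirr h0 1]

theorem one_le_pq_one_add_one_mul (h0 : 0 < α) (h1 : α < 1) : 1 ≤ (pq α 1 + 1) * α := by
  have hinv : α⁻¹ = pq α 1 + gaussIter α 1 := inv_gaussIter h0.le 0
  rw [← div_le_iff₀ h0, one_div, hinv]
  linarith [gaussIter_lt_one h1 1]

theorem qden_mul_pnum_succ_sub (α : ℝ) (m : ℕ) :
    (qden α m : ℤ) * pnum α (m + 1) - qden α (m + 1) * pnum α m = (-1) ^ m := by
  induction m with
  | zero => simp [qden, pnum]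
  | succ m ih =>
    rw [qden, pnum, pow_succ, ← ih]
    push_cast
    ring

theorem isCoprime_pnum_qden (α : ℝ) (m : ℕ) : IsCoprime (pnum α m : ℤ) (qden α m) := by
  refine ⟨-(-1) ^ m * qden α (m + 1), (-1) ^ m * pnum α (m + 1), ?_⟩
  have hsign : ((-1 : ℤ) ^ m) * (-1) ^ m = 1 := by rw [← mul_pow]; simp
  linear_combination (-1) ^ m * qden_mul_pnum_succ_sub α m + hsign

theorem qden_succ_mul_fseq_add (α : ℝ) (m : ℕ) :
    qden α (m + 1) * fseq α m + qden α m * fseq α (m + 1) = 1 := by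
  have hdet : (qden α m : ℝ) * pnum α (m + 1) - qden α (m + 1) * pnum α m = (-1) ^ m := by
    exact_mod_cast qden_mul_pnum_succ_sub α m
  have hsign : ((-1 : ℝ) ^ m) * (-1) ^ m = 1 := by rw [← mul_pow]; simp
  simp only [fseq, pow_succ]
  linear_combination (-1) ^ m * hdet + hsign

theorem fseq_add_two (α : ℝ) (m : ℕ) :
    fseq α (m + 2) = fseq α m - pq α (m + 2) * fseq α (m + 1) := by
  simp only [fseq, qden, pnum, pow_succ]
  push_cast
  ring

theorem fseq_succ (hirr : Irrational α) (h0 : 0 < α) (m : ℕ) :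
    fseq α (m + 1) = gaussIter α (m + 1) * fseq α m := by
  induction m with
  | zero =>
    have hinv : α⁻¹ = pq α 1 + gaussIter α 1 := inv_gaussIter h0.le 0
    rw [zero_add, eq_sub_of_add_eq' hinv.symm]
    simp only [fseq, qden, pnum]
    field_simp
    simp only [Nat.cast_one, Nat.cast_zero]
    ring
  | succ m ih =>
    have hpos := gaussIter_pos hirr h0 (m + 1)
    have hprev : fseq α m = (gaussIter α (m + 1))⁻¹ * fseq α (m + 1) := by
      rw [ih]
      field_simp
    rw [fseq_add_two, hprev, inv_gaussIter h0.le]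
    ring

theorem fseq_pos (hirr : Irrational α) (h0 : 0 < α) (m : ℕ) : 0 < fseq α m := by
  induction m with
  | zero => simpa [fseq, qden, pnum] using h0
  | succ m ih => exact fseq_succ hirr h0 m ▸ mul_pos (gaussIter_pos hirr h0 _) ih

theorem fseq_succ_le (hirr : Irrational α) (h0 : 0 < α) (m : ℕ) :
    fseq α (m + 1) ≤ fseq α m := by
  rw [fseq_succ hirr h0, gaussIter_succ]
  exact mul_le_of_le_one_left (fseq_pos hirr h0 m).le (Int.fract_lt_one _).le

theorem abs_qden_mul_sub_pnum (hirr : Irrational α) (h0 : 0 < α) (m : ℕ) :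
    |qden α m * α - pnum α m| = fseq α m := by
  rw [← abs_of_pos (fseq_pos hirr h0 m), fseq, abs_mul, abs_pow, abs_neg, abs_one, one_pow,
    one_mul]

theorem pq_mul_qden_le (α : ℝ) : ∀ m, pq α (m + 1) * qden α m ≤ qden α (m + 1)
  | 0 => (mul_one _).le
  | _ + 1 => Nat.le_add_right _ _

theorem qden_pos (hirr : Irrational α) (h0 : 0 < α) (h1 : α < 1) : ∀ m, 0 < qden α m
  | 0 => Nat.one_pos
  | m + 1 => (Nat.mul_pos (pq_succ_pos hirr h0 h1 m) (qden_pos hirr h0 h1 m)).trans_le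
      (pq_mul_qden_le α m)

theorem qden_succ_le (hirr : Irrational α) (h0 : 0 < α) (h1 : α < 1) :
    ∀ m, qden α (m + 1) ≤ (pq α (m + 1) + 1) * qden α m
  | 0 => by simp [qden]
  | m + 1 => by
    rw [qden, add_one_mul]
    gcongr
    exact (Nat.le_mul_of_pos_left _ (pq_succ_pos hirr h0 h1 m)).trans (pq_mul_qden_le α m)

theorem pq_mul_qden_mul_fseq_le_one (hirr : Irrational α) (h0 : 0 < α) (m : ℕ) :
    pq α (m + 1) * (qden α m * fseq α m) ≤ 1 := by
  have hq : (pq α (m + 1) * qden α m : ℝ) ≤ qden α (m + 1) := by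
    exact_mod_cast pq_mul_qden_le α m
  have hf := fseq_pos hirr h0
  calc pq α (m + 1) * (qden α m * fseq α m) = pq α (m + 1) * qden α m * fseq α m := by ring
    _ ≤ qden α (m + 1) * fseq α m := by gcongr; exact (hf m).le
    _ ≤ qden α (m + 1) * fseq α m + qden α m * fseq α (m + 1) :=
      le_add_of_nonneg_right (mul_nonneg (Nat.cast_nonneg _) (hf (m + 1)).le)
    _ = 1 := qden_succ_mul_fseq_add α m

theorem one_le_pq_add_two_mul_qden_mul_fseq (hirr : Irrational α) (h0 : 0 < α) (h1 : α < 1)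
    (m : ℕ) : 1 ≤ (pq α (m + 1) + 2) * (qden α m * fseq α m) := by
  have hq : (qden α (m + 1) : ℝ) ≤ (pq α (m + 1) + 1) * qden α m := by
    exact_mod_cast qden_succ_le hirr h0 h1 m
  calc (1 : ℝ) = qden α (m + 1) * fseq α m + qden α m * fseq α (m + 1) :=
        (qden_succ_mul_fseq_add α m).symm
    _ ≤ (pq α (m + 1) + 1) * qden α m * fseq α m + qden α m * fseq α m := by
      gcongr
      · exact (fseq_pos hirr h0 m).le
      · exact fseq_succ_le hirr h0 m
    _ = (pq α (m + 1) + 2) * (qden α m * fseq α m) := by ring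

end ContinuedFraction

section Discrepancy

variable {α : ℝ}

theorem abs_fractSum_mul_qden_sub_le (hirr : Irrational α) (h0 : 0 < α) (h1 : α < 1) {m b : ℕ}
    (hb : b ≤ pq α (m + 1)) (x y : ℝ) :
    |fractSum α (b * qden α m) x - fractSum α (b * qden α m) y| ≤
      9 / 4 + 1 / 4 * pq α (m + 1) := by
  have hf := abs_qden_mul_sub_pnum hirr h0 m
  have hκ : 0 ≤ qden α m * fseq α m := mul_nonneg (Nat.cast_nonneg _) (fseq_pos hirr h0 m).le
  have hbκ : b * (qden α m * fseq α m) ≤ 1 :=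
    (mul_le_mul_of_nonneg_right (by exact_mod_cast hb) hκ).trans
      (pq_mul_qden_mul_fseq_le_one hirr h0 m)
  have hA : (1 : ℝ) ≤ pq α (m + 1) + 2 := by linarith [Nat.cast_nonneg (α := ℝ) (pq α (m + 1))]
  have hosc := abs_fractSum_mul_sub_le (α := α) (p := pnum α m) (qden_pos hirr h0 h1 m).ne'
    (isCoprime_pnum_qden α m) (by simpa only [Int.cast_natCast, hf] using hbκ) hA
    (by simpa only [Int.cast_natCast, hf] using
      one_le_pq_add_two_mul_qden_mul_fseq hirr h0 h1 m) x y
  linarith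

theorem abs_ddisc_add_one_le (hirr : Irrational α) (h0 : 0 < α) (h1 : α < 1) {b : ℕ}
    (hb : b ≤ pq α 1) {β : ℝ} (hβ0 : 0 ≤ β) (hβ1 : β ≤ 1) :
    |ddisc α β (b + 1)| ≤ 1 + 1 / 4 * pq α 1 := by
  have hbα : b * α < 1 :=
    (mul_le_mul_of_nonneg_right (by exact_mod_cast hb) h0.le).trans_lt
      (pq_one_mul_lt_one hirr h0)
  have hb' : ((b + 1 : ℕ) - 1 : ℝ) * α < 1 := by simpa using hbα
  have hlower := sub_mul_le_ddisc (M := b) h0 hb' hβ0 hβ1 (by simp) hbα.le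
  have hupper := ddisc_le_of_one_le_mul h0 hb' hβ0 (le_add_of_nonneg_left (Nat.cast_nonneg _))
    (one_le_pq_one_add_one_mul h0 h1)
  push_cast at hlower
  rw [abs_le]
  constructor <;> linarith [Nat.cast_nonneg (α := ℝ) (pq α 1)]

theorem abs_fractSum_sub_fractSum_zero_le (hirr : Irrational α) (h0 : 0 < α) (h1 : α < 1)
    {c : ℕ → ℕ} {N : ℕ} (hc : ∀ h ≤ N, c h ≤ pq α (h + 1)) (x : ℝ) :
    |fractSum α (∑ h ∈ range (N + 1), c h * qden α h + 1) x -
        fractSum α (∑ h ∈ range (N + 1), c h * qden α h + 1) 0| ≤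
      1 + 9 / 4 * N + 1 / 4 * ∑ m ∈ Icc 1 (N + 1), (pq α m : ℝ) := by
  induction N with
  | zero =>
    rw [fractSum_sub_fractSum_zero]
    simpa [qden] using abs_ddisc_add_one_le hirr h0 h1 (hc 0 le_rfl) (Int.fract_nonneg (-x))
      (Int.fract_lt_one _).le
  | succ N ih =>
    set M := ∑ h ∈ range (N + 1), c h * qden α h + 1 with hMdef
    have hsplit : ∑ h ∈ range (N + 1 + 1), c h * qden α h + 1 =
        M + c (N + 1) * qden α (N + 1) := by
      rw [hMdef, sum_range_succ, add_right_comm]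
    have hM := ih fun h hh => hc h (hh.trans N.le_succ)
    have hblock := abs_fractSum_mul_qden_sub_le hirr h0 h1 (hc (N + 1) le_rfl) (x + M * α)
      (0 + M * α)
    rw [hsplit, sum_Icc_succ_top (by omega), fractSum_add α M, fractSum_add α M _ 0,
      add_sub_add_comm]
    refine (abs_add_le _ _).trans ((add_le_add hM hblock).trans_eq ?_)
    push_cast
    ring

theorem natCast_mul_Dstar (α : ℝ) {n : ℕ} (hn : n ≠ 0) : n * Dstar α n = nDsup α n := by
  rw [Dstar, nDsup, sSup_image', sSup_image', Real.mul_iSup_of_nonneg (Nat.cast_nonneg n)]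
  refine iSup_congr fun β => mul_div_cancel₀ _ ?_
  exact_mod_cast hn

theorem nDsup_le {n : ℕ} {B : ℝ} (hB : ∀ x, |fractSum α n x - fractSum α n 0| ≤ B) :
    nDsup α n ≤ B := by
  refine csSup_le ((Set.nonempty_Ioo.mpr one_pos).image _) ?_
  rintro _ ⟨β, ⟨hβ0, hβ1⟩, rfl⟩
  simpa only [fractSum_sub_fractSum_zero, neg_neg, Int.fract_eq_self.mpr ⟨hβ0.le, hβ1⟩]
    using hB (-β)

end Discrepancy

theorem discrepancy_upper_general (α : ℝ) (hirr : Irrational α) (h0 : 0 < α) (h1 : α < 1)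
    (n N : ℕ) (c : ℕ → ℕ) (hc : ∀ h ≤ N, c h ≤ pq α (h + 1))
    (hn : n = ∑ h ∈ range (N + 1), c h * qden α h + 1) :
    (n : ℝ) * Dstar α n = nDsup α n ∧
    nDsup α n ≤ 1 + 9 / 4 * (N : ℝ) + (1 / 4) * ∑ m ∈ Icc 1 (N + 1), (pq α m : ℝ) :=
  ⟨natCast_mul_Dstar α (by omega),
    nDsup_le (hn ▸ abs_fractSum_sub_fractSum_zero_le hirr h0 h1 hc)⟩

/-- for every `n ≥ 2`, with `N = ord(n-1)`,
`n D_n^*(α) = sup_{β ∈ (0,1)} |d_n(α,β)| ≤ 1 + 3N + (1/4) ∑_{m=1}^{N+1} a_m`. -/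
theorem discrepancy_upper (α : ℝ) (hirr : Irrational α) (h0 : 0 < α) (h1 : α < 1)
    (n : ℕ) (hn : 2 ≤ n) (N : ℕ) (c : ℕ → ℕ) (hOst : IsOstrowski α (n - 1) N c) :
    (n : ℝ) * Dstar α n = nDsup α n ∧
    nDsup α n ≤ 1 + 3 * (N : ℝ) + (1 / 4) * ∑ m ∈ Finset.Icc 1 (N + 1), (pq α m : ℝ) := by
  obtain ⟨hsum, hc, -⟩ := hOst
  obtain ⟨hD, hle⟩ := discrepancy_upper_general α hirr h0 h1 n N c (fun h _ => hc h) (by omega)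
  exact ⟨hD, hle.trans (by gcongr; norm_num)⟩
end
end
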